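/- (Three-point lemma for the perturbed prox-mapping.) Fix s ∈ S, a policy π_k with full support, a fixed full-support policy π_0, a vector G ∈ ℝ^A, η_k > 0 and τ_k ≥ 0. Let π_{k+1}(·|s) be the minimizer over p ∈ Δ_A of η_k[⟨G, p⟩ + h^p(s) + τ_k D_{π_0}^p(s)] + D_{π_k}^p(s), where h is convex relative to KL. Then for every p ∈ Δ_A: η_k[⟨G, π_{k+1}(·|s) − p(·|s)⟩ + h^{π_{k+1}}(s) − h^p(s)] + η_k τ_k [D_{π_0}^{π_{k+1}}(s) − D_{π_0}^p(s)] + D_{π_k}^{π_{k+1}}(s) ≤ D_{π_k}^p(s) − (1 + η_k τ_k) D_{π_{k+1}}^p(s). -/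

import Mathlib

open Finset

noncomputable section

namespace RL

/-- The probability simplex on a finite set `A`. -/
def simplex (A : Type*) [Fintype A] : Set (A → ℝ) :=
  {p | (∀ a, 0 ≤ p a) ∧ ∑ a, p a = 1}

/-- `KL q p` is the Bregman (KL) divergence `D_q^p = ∑_a p a * log (p a / q a)`. -/
def KL {A : Type*} [Fintype A] (q p : A → ℝ) : ℝ :=
  ∑ a, p a * Real.log (p a / q a)

/-- `next` minimizes `p ↦ η * (⟨G, p⟩ + hreg p) + KL base p` over the simplex. -/
def IsProxStep {A : Type*} [Fintype A] (G : A → ℝ) (hreg : (A → ℝ) → ℝ)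
    (η : ℝ) (base next : A → ℝ) : Prop :=
  next ∈ simplex A ∧ ∀ p ∈ simplex A,
    η * ((∑ a, G a * next a) + hreg next) + KL base next ≤
      η * ((∑ a, G a * p a) + hreg p) + KL base p


lemma KL_eq {A : Type*} [Fintype A] (r p : A → ℝ) (hr : ∀ a, 0 < r a) :
    KL r p = ∑ a, p a * Real.log (p a) - ∑ a, p a * Real.log (r a) := by
  unfold KL
  rw [← Finset.sum_sub_distrib]
  refine Finset.sum_congr rfl fun a _ => ?_
  by_cases hp : p a = 0
  · simp [hp]
  · rw [Real.log_div hp (hr a).ne']; ring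

lemma mix_mem {A : Type*} [Fintype A] {p q : A → ℝ} (hp : p ∈ simplex A) (hq : q ∈ simplex A)
    {t : ℝ} (h0 : 0 < t) (h1 : t < 1) : (fun a => q a + t * (p a - q a)) ∈ simplex A := by
  refine ⟨fun a => ?_, ?_⟩
  · have := hp.1 a
    have := hq.1 a
    nlinarith [mul_nonneg h0.le (hp.1 a), mul_nonneg (sub_nonneg.2 h1.le) (hq.1 a)]
  · rw [Finset.sum_add_distrib, ← Finset.mul_sum, Finset.sum_sub_distrib, hp.2, hq.2]; ring

lemma ent_grad (x q : ℝ) (hx : 0 ≤ x) (hq : 0 ≤ q) (hxq : x = 0 → q = 0) :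
    x * Real.log x - q * Real.log q ≤ (x - q) * (Real.log x + 1) := by
  rcases hx.eq_or_lt with h | h
  · have := hxq h.symm
    simp [← h, this]
  rcases hq.eq_or_lt with h' | h'
  · simp only [← h']; nlinarith
  · have h2 := Real.log_le_sub_one_of_pos (div_pos h h')
    rw [Real.log_div h.ne' h'.ne'] at h2
    have h3 := mul_le_mul_of_nonneg_left h2 h'.le
    have h4 : q * (x / q - 1) = x - q := by field_simp
    rw [h4] at h3
    nlinarith

lemma key {A : Type*} [Fintype A] (L : (A → ℝ) → ℝ) (c : ℝ) (hc : 0 < c) (q p : A → ℝ)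
    (hq : q ∈ simplex A) (hp : p ∈ simplex A) (t : ℝ) (h0 : 0 < t) (h1 : t < 1)
    (hL : L (fun a => q a + t * (p a - q a)) ≤ (1 - t) * L q + t * L p)
    (hmin : ∀ x ∈ simplex A, L q + c * ∑ a, q a * Real.log (q a)
      ≤ L x + c * ∑ a, x a * Real.log (x a)) :
    L q - L p ≤ c * ∑ a, (p a - q a) * Real.log (q a + t * (p a - q a)) := by
  have hx := mix_mem hp hq h0 h1
  have h2 := hmin _ hx
  have h3 : ∑ a, ((q a + t * (p a - q a)) * Real.log (q a + t * (p a - q a))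
      - q a * Real.log (q a)) ≤
      ∑ a, (t * ((p a - q a) * Real.log (q a + t * (p a - q a))) + t * (p a - q a)) := by
    refine Finset.sum_le_sum fun a _ => ?_
    have := ent_grad (q a + t * (p a - q a)) (q a) (hx.1 a) (hq.1 a) (fun h => by
      have := hq.1 a
      nlinarith [mul_nonneg h0.le (hp.1 a), mul_nonneg (sub_nonneg.2 h1.le) (hq.1 a)])
    linarith
  rw [Finset.sum_sub_distrib, Finset.sum_add_distrib, ← Finset.mul_sum, ← Finset.mul_sum,
    Finset.sum_sub_distrib, hp.2, hq.2] at h3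
  have h4 := mul_le_mul_of_nonneg_left h3 hc.le
  refine le_of_mul_le_mul_left ?_ h0
  linarith

lemma full_support {A : Type*} [Fintype A] (c M : ℝ) (hc : 0 < c) (q p : A → ℝ)
    (hq : q ∈ simplex A) (hp : ∀ a, 0 < p a)
    (hk : ∀ t : ℝ, 0 < t → t < 1 →
      M ≤ c * ∑ a, (p a - q a) * Real.log (q a + t * (p a - q a))) (a : A) : 0 < q a := by
  classical
  rcases (hq.1 a).eq_or_lt with h | h
  swap
  · exact h
  exfalso
  set B := ∑ b, (p b - q b) * Real.log (p b) with hB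
  have hbound : ∀ t : ℝ, 0 < t → t < 1 → M / c ≤ B + p a * Real.log t := by
    intro t h0 h1
    have h2 : M / c ≤ ∑ a, (p a - q a) * Real.log (q a + t * (p a - q a)) := by
      rw [div_le_iff₀' hc]; exact hk t h0 h1
    refine h2.trans ?_
    have : B + p a * Real.log t
        = ∑ b, ((p b - q b) * Real.log (p b) + if b = a then p a * Real.log t else 0) := by
      rw [Finset.sum_add_distrib]; simp [hB]
    rw [this]
    refine Finset.sum_le_sum fun b _ => ?_
    split_ifs with hb
    · subst hb
      rw [← h]
      simp only [sub_zero, zero_add]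
      rw [Real.log_mul h0.ne' (hp b).ne']
      linarith
    · have hqb := hq.1 b
      have hpb := hp b
      have hxpos : 0 < q b + t * (p b - q b) := by
        nlinarith [mul_pos h0 hpb, mul_nonneg (sub_nonneg.2 h1.le) hqb]
      rw [add_zero]
      rcases le_total (q b) (p b) with hle | hle
      · refine mul_le_mul_of_nonneg_left (Real.log_le_log hxpos ?_) (by linarith)
        nlinarith
      · refine mul_le_mul_of_nonpos_left (Real.log_le_log hpb ?_) (by linarith)
        nlinarith
  set K := min (-1) ((M / c - B) / p a - 1) with hK
  have := hbound (Real.exp K) (Real.exp_pos _) (by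
    rw [Real.exp_lt_one_iff]
    exact (min_le_left _ _).trans_lt (by norm_num))
  rw [Real.log_exp] at this
  have h5 : K ≤ (M / c - B) / p a - 1 := min_le_right _ _
  have h6 := mul_le_mul_of_nonneg_left h5 (hp a).le
  have h7 : p a * ((M / c - B) / p a - 1) = M / c - B - p a := by
    have := (hp a).ne'
    field_simp
  have := hp a
  linarith

lemma limit_ineq {A : Type*} [Fintype A] (c M : ℝ) (q p : A → ℝ)
    (hq : ∀ a, 0 < q a)
    (hk : ∀ t : ℝ, 0 < t → t < 1 →
      M ≤ c * ∑ a, (p a - q a) * Real.log (q a + t * (p a - q a))) :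
    M ≤ c * ∑ a, (p a - q a) * Real.log (q a) := by
  have hcont : ContinuousAt
      (fun t : ℝ => c * ∑ a, (p a - q a) * Real.log (q a + t * (p a - q a))) 0 := by
    refine continuousAt_const.mul (tendsto_finsetSum _ fun a _ => ?_)
    refine (ContinuousAt.mul continuousAt_const (ContinuousAt.log (by fun_prop) ?_))
    simpa using (hq a).ne'
  have ht := hcont.tendsto.mono_left (nhdsWithin_le_nhds (s := Set.Ioi (0 : ℝ)))
  simp only [zero_mul, add_zero] at ht
  refine ge_of_tendsto ht ?_
  filter_upwards [Ioo_mem_nhdsGT (zero_lt_one (α := ℝ))] with t htt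
  exact hk t htt.1 htt.2

/-- three-point lemma for the perturbed prox-mapping: if
`π_{k+1}(·|s)` minimizes
`p ↦ η_k [⟨G, p⟩ + h^p(s) + τ_k D_{π_0}^p(s)] + D_{π_k}^p(s)` over the
simplex, where `h` is convex relative to KL, then for every `p ∈ Δ_A`:
`η_k [⟨G, π_{k+1} - p⟩ + h(π_{k+1}) - h(p)] + η_k τ_k [D_{π_0}^{π_{k+1}} - D_{π_0}^p]
  + D_{π_k}^{π_{k+1}} ≤ D_{π_k}^p - (1 + η_k τ_k) D_{π_{k+1}}^p`. -/
theorem perturbed_prox_three_point {A : Type*} [Fintype A] [Nonempty A]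
    (h : (A → ℝ) → ℝ) (h' : (A → ℝ) → A → ℝ)
    (hconv : ∀ p ∈ simplex A, ∀ q ∈ simplex A,
      0 ≤ h p - (h q + ∑ a, h' q a * (p a - q a)))
    (π0 : A → ℝ) (hπ0 : π0 ∈ simplex A) (hπ0pos : ∀ a, 0 < π0 a)
    (G : A → ℝ) (ηk τk : ℝ) (hηk : 0 < ηk) (hτk : 0 ≤ τk)
    (πk : A → ℝ) (hπk : πk ∈ simplex A) (hπkpos : ∀ a, 0 < πk a)
    (πk1 : A → ℝ)
    (hmin : IsProxStep G (fun p => h p + τk * KL π0 p) ηk πk πk1) :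
    ∀ p ∈ simplex A,
      ηk * ((∑ a, G a * (πk1 a - p a)) + (h πk1 - h p))
          + ηk * τk * (KL π0 πk1 - KL π0 p) + KL πk πk1 ≤
        KL πk p - (1 + ηk * τk) * KL πk1 p := by
  intro p hp
  obtain ⟨hq, hm⟩ := hmin
  have hc : 0 < 1 + ηk * τk := by positivity
  have hhc : ∀ p ∈ simplex A, ∀ t : ℝ, 0 < t → t < 1 →
      h (fun a => πk1 a + t * (p a - πk1 a)) ≤ (1 - t) * h πk1 + t * h p := by
    intro p hp t h0 h1
    have hx := mix_mem hp hq h0 h1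
    have e1 := mul_nonneg h0.le (hconv p hp _ hx)
    have e2 := mul_nonneg (sub_nonneg.2 h1.le) (hconv πk1 hq _ hx)
    set x : A → ℝ := fun a => πk1 a + t * (p a - πk1 a) with hxdef
    have e3 : t * ∑ a, h' x a * (p a - x a) + (1 - t) * ∑ a, h' x a * (πk1 a - x a) = 0 := by
      rw [Finset.mul_sum, Finset.mul_sum, ← Finset.sum_add_distrib]
      refine Finset.sum_eq_zero fun a _ => ?_
      simp only [hxdef]; ring
    linarith
  set L : (A → ℝ) → ℝ := fun p => ηk * h p
    + ∑ a, p a * (ηk * G a - ηk * τk * Real.log (π0 a) - Real.log (πk a)) with hLdef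
  have hLe : ∀ p : A → ℝ, L p = ηk * ((∑ a, G a * p a) + h p)
      - ηk * τk * ∑ a, p a * Real.log (π0 a) - ∑ a, p a * Real.log (πk a) := by
    intro p
    have : ∑ a, p a * (ηk * G a - ηk * τk * Real.log (π0 a) - Real.log (πk a))
      = ηk * (∑ a, G a * p a)
      - ηk * τk * ∑ a, p a * Real.log (π0 a) - ∑ a, p a * Real.log (πk a) := by
      rw [Finset.mul_sum, Finset.mul_sum, ← Finset.sum_sub_distrib, ← Finset.sum_sub_distrib]
      exact Finset.sum_congr rfl fun a _ => by ring
    simp only [hLdef, this]; ring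
  have hLc : ∀ p ∈ simplex A, ∀ t : ℝ, 0 < t → t < 1 →
      L (fun a => πk1 a + t * (p a - πk1 a)) ≤ (1 - t) * L πk1 + t * L p := by
    intro p hp t h0 h1
    have e := mul_le_mul_of_nonneg_left (hhc p hp t h0 h1) hηk.le
    have e3 : ∀ w : A → ℝ, ∑ a, (πk1 a + t * (p a - πk1 a)) * w a
        = (1 - t) * ∑ a, πk1 a * w a + t * ∑ a, p a * w a := by
      intro w
      rw [Finset.mul_sum, Finset.mul_sum, ← Finset.sum_add_distrib]
      exact Finset.sum_congr rfl fun a _ => by ring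
    simp only [hLdef, e3 (fun a => ηk * G a - ηk * τk * Real.log (π0 a) - Real.log (πk a))]
    linarith
  have hmL : ∀ x ∈ simplex A, L πk1 + (1 + ηk * τk) * ∑ a, πk1 a * Real.log (πk1 a)
      ≤ L x + (1 + ηk * τk) * ∑ a, x a * Real.log (x a) := by
    intro x hx
    have := hm x hx
    simp only [KL_eq π0 _ hπ0pos, KL_eq πk _ hπkpos] at this
    rw [hLe, hLe]
    linarith
  have hkey := fun p hp t h0 h1 =>
    key L _ hc πk1 p hq hp t h0 h1 (hLc p hp t h0 h1) hmL
  have hpos := full_support _ _ hc πk1 πk hq hπkpos (hkey πk hπk)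
  have hfin := limit_ineq _ _ πk1 p hpos (hkey p hp)
  rw [hLe, hLe] at hfin
  rw [KL_eq π0 _ hπ0pos, KL_eq π0 _ hπ0pos, KL_eq πk _ hπkpos, KL_eq πk _ hπkpos,
    KL_eq πk1 _ hpos]
  simp only [mul_sub, sub_mul, Finset.sum_sub_distrib] at hfin ⊢
  linarith

end RL
end
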